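/- Let β ≥ 0 and let 𝐜^(1), 𝐜^(2) ∈ M_N([0,∞)). Then |p_N(β,𝐜^(2)) − p_N(β,𝐜^(1))| ≤ (β/(2N²)) Σ_{i,j=1}^N |c_{ij}^(2) − c_{ij}^(1)|. In particular, for two constants c₁, c₂ ≥ 0 (constant matrices), |p_N(β,c₂) − p_N(β,c₁)| ≤ (β/2)|c₂ − c₁|. -/

import Mathlib

open MeasureTheory Filter

/-- Poisson probability mass function with parameter `lam`. -/
noncomputable def poissonPMF (lam : ℝ) (k : ℕ) : ℝ :=
  Real.exp (-lam) * lam ^ k / (Nat.factorial k)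

/-- Potts Hamiltonian `H_N(σ, J) = Σ_{i,j} J_{ij} δ(σ_i, σ_j)`. -/
noncomputable def potts.H (q N : ℕ) (σ : Fin N → Fin q) (J : Fin N → Fin N → ℝ) : ℝ :=
  ∑ i, ∑ j, J i j * (if σ i = σ j then (1 : ℝ) else 0)

/-- Partition function `Z_N(J)`. -/
noncomputable def potts.Z (q N : ℕ) (J : Fin N → Fin N → ℝ) : ℝ :=
  ∑ σ : Fin N → Fin q, Real.exp (- potts.H q N σ J)

/-- Expectation over the Poissonian disorder: the entries `J_{ij}` are independent
Poisson random variables with means `c_{ij} / (2N)`. -/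
noncomputable def potts.E (N : ℕ) (c : Fin N → Fin N → ℝ)
    (g : (Fin N → Fin N → ℕ) → ℝ) : ℝ :=
  ∑' J : Fin N → Fin N → ℕ,
    (∏ i, ∏ j, poissonPMF (c i j / (2 * N)) (J i j)) * g J

/-- Quenched pressure for a general nonnegative connectivity matrix `c`. -/
noncomputable def potts.pmat (q N : ℕ) (β : ℝ) (c : Fin N → Fin N → ℝ) : ℝ :=
  potts.E N c (fun J => (1 / N) * Real.log (potts.Z q N (fun i j => β * (J i j : ℝ))))

/-- Quenched pressure for the constant connectivity matrix `c_{ij} ≡ c`. -/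
noncomputable def potts.p (q N : ℕ) (β c : ℝ) : ℝ :=
  potts.pmat q N β (fun _ _ => c)

/-- Annealed pressure `𝒫(β, c) = ln q + (c/2) ln(1 - (1 - e^{-β})/q)`. -/
noncomputable def potts.annealed (q : ℕ) (β c : ℝ) : ℝ :=
  Real.log q + (c / 2) * Real.log (1 - (1 - Real.exp (-β)) / q)

/-!
Poisson laws add under convolution, so raising the mean of a Poisson coupling from `r` to `r + s`
amounts to adding an independent Poisson variable of mean `s`. An `ℓ¹`-Lipschitz function of the
couplings then moves in expectation by at most its constant times the total added mean; going from
`r` to `s` through `min r s` bounds the change by the `ℓ¹` distance of the means. The log-partition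
function is `1`-Lipschitz in the couplings for the `ℓ¹` distance, because each Hamiltonian
`H(σ, ·)` is and `log ∑ exp` is nonexpansive for the sup distance.
-/

open ProbabilityTheory (poissonMeasure)
open scoped NNReal

section LogSumExp

variable {ι : Type*} [Fintype ι] [Nonempty ι]

lemma log_sum_exp_le_log_sum_exp_add {f g : ι → ℝ} {C : ℝ} (h : ∀ i, f i ≤ g i + C) :
    Real.log (∑ i, Real.exp (f i)) ≤ Real.log (∑ i, Real.exp (g i)) + C := by
  have sum_exp_pos (u : ι → ℝ) : 0 < ∑ i, Real.exp (u i) :=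
    Finset.sum_pos (fun i _ ↦ Real.exp_pos _) Finset.univ_nonempty
  calc
    Real.log (∑ i, Real.exp (f i)) ≤ Real.log ((∑ i, Real.exp (g i)) * Real.exp C) := by
      refine Real.log_le_log (sum_exp_pos f) ?_
      rw [Finset.sum_mul]
      exact Finset.sum_le_sum fun i _ ↦ by rw [← Real.exp_add]; exact Real.exp_le_exp.2 (h i)
    _ = Real.log (∑ i, Real.exp (g i)) + C := by
      rw [Real.log_mul (sum_exp_pos g).ne' (Real.exp_ne_zero C), Real.log_exp]

lemma abs_log_sum_exp_sub_log_sum_exp_le {f g : ι → ℝ} {C : ℝ} (h : ∀ i, |f i - g i| ≤ C) :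
    |Real.log (∑ i, Real.exp (f i)) - Real.log (∑ i, Real.exp (g i))| ≤ C := by
  have hfg := log_sum_exp_le_log_sum_exp_add fun i ↦ show f i ≤ g i + C by
    linarith [(abs_le.1 (h i)).2]
  have hgf := log_sum_exp_le_log_sum_exp_add fun i ↦ show g i ≤ f i + C by
    linarith [(abs_le.1 (h i)).1]
  exact abs_le.2 ⟨by linarith, by linarith⟩

end LogSumExp

lemma pi_conv_pi {ι M : Type*} [Fintype ι] [AddMonoid M] [MeasurableSpace M] [MeasurableAdd₂ M]
    (μ ν : ι → Measure M) [∀ i, IsFiniteMeasure (μ i)] [∀ i, IsFiniteMeasure (ν i)] :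
    (Measure.pi μ).conv (Measure.pi ν) = Measure.pi fun i ↦ (μ i).conv (ν i) := by
  have hsplit := measurePreserving_arrowProdEquivProdArrow M M ι μ ν
  unfold Measure.conv
  rw [← hsplit.map_eq, Measure.map_map (by fun_prop) hsplit.measurable,
    ← Measure.pi_map_pi (f := fun _ (x : M × M) ↦ x.1 + x.2) fun i ↦ by fun_prop]
  rfl

lemma dist_integral_conv_le {M E : Type*} [AddMonoid M] [MeasurableSpace M] [MeasurableAdd₂ M]
    [NormedAddCommGroup E] [NormedSpace ℝ E] {μ ν : Measure M} [IsProbabilityMeasure μ]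
    [IsProbabilityMeasure ν] {g : M → E} {φ : M → ℝ} (hgconv : Integrable g (μ.conv ν))
    (hg : Integrable g μ) (hφ : Integrable φ ν) (hle : ∀ x y, dist (g (x + y)) (g x) ≤ φ y) :
    dist (∫ z, g z ∂μ.conv ν) (∫ x, g x ∂μ) ≤ ∫ y, φ y ∂ν := by
  have hadd : Integrable (fun z : M × M ↦ g (z.1 + z.2)) (μ.prod ν) :=
    hgconv.comp_measurable (by fun_prop)
  have hfst : ∫ x, g x ∂μ = ∫ z : M × M, g z.1 ∂μ.prod ν := by
    simp [integral_fun_fst]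
  have hsnd : ∫ y, φ y ∂ν = ∫ z : M × M, φ z.2 ∂μ.prod ν := by
    simp [integral_fun_snd]
  have hconv : ∫ z, g z ∂μ.conv ν = ∫ z : M × M, g (z.1 + z.2) ∂μ.prod ν :=
    integral_map (by fun_prop) hgconv.aestronglyMeasurable
  rw [hfst, hsnd, hconv, dist_eq_norm, ← integral_sub hadd (hg.comp_fst ν)]
  refine norm_integral_le_of_norm_le (hφ.comp_snd μ) (.of_forall fun z ↦ ?_)
  rw [← dist_eq_norm]
  exact hle z.1 z.2

lemma hasSum_poissonMeasure_mean (r : ℝ≥0) :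
    HasSum (fun n : ℕ ↦ Real.exp (-r) * (r : ℝ) ^ n / n.factorial * n) r := by
  rw [← hasSum_nat_add_iff' 1]
  have hshift (n : ℕ) : Real.exp (-r) * (r : ℝ) ^ (n + 1) / (n + 1).factorial * (n + 1 : ℕ) =
      r * (Real.exp (-r) * (r : ℝ) ^ n / n.factorial) := by
    rw [Nat.factorial_succ]
    push_cast
    field_simp
    ring
  simpa [-Nat.cast_add, hshift] using
    (ProbabilityTheory.hasSum_one_poissonMeasure r).mul_left (r : ℝ)

lemma integrable_natCast_poissonMeasure (r : ℝ≥0) :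
    Integrable (fun n : ℕ ↦ (n : ℝ)) (poissonMeasure r) := by
  simpa [ProbabilityTheory.integrable_poissonMeasure_iff]
    using (hasSum_poissonMeasure_mean r).summable

lemma integral_natCast_poissonMeasure (r : ℝ≥0) : ∫ n : ℕ, (n : ℝ) ∂poissonMeasure r = r := by
  simpa [ProbabilityTheory.integral_poissonMeasure] using (hasSum_poissonMeasure_mean r).tsum_eq

section PoissonPi

variable {ι : Type*} [Fintype ι]

/-- The joint law of independent Poisson variables with means `r i`. -/
noncomputable def poissonPi (r : ι → ℝ≥0) : Measure (ι → ℕ) :=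
  Measure.pi fun i ↦ poissonMeasure (r i)

instance (r : ι → ℝ≥0) : IsProbabilityMeasure (poissonPi r) := by
  unfold poissonPi
  infer_instance

lemma poissonPi_real_singleton (r : ι → ℝ≥0) (J : ι → ℕ) :
    (poissonPi r).real {J} = ∏ i, poissonPMF (r i) (J i) := by
  simp only [poissonPi, measureReal_def, Measure.pi_singleton, ENNReal.toReal_prod]
  exact Finset.prod_congr rfl fun i _ ↦ ProbabilityTheory.poissonMeasure_real_singleton _ _

lemma poissonPi_conv_poissonPi (r s : ι → ℝ≥0) :
    (poissonPi r).conv (poissonPi s) = poissonPi (r + s) := by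
  simp only [poissonPi, pi_conv_pi, ProbabilityTheory.poissonMeasure_conv_poissonMeasure,
    Pi.add_apply]

lemma integrable_eval_poissonPi (r : ι → ℝ≥0) (i : ι) :
    Integrable (fun J : ι → ℕ ↦ (J i : ℝ)) (poissonPi r) :=
  integrable_comp_eval (integrable_natCast_poissonMeasure (r i))

lemma integral_eval_poissonPi (r : ι → ℝ≥0) (i : ι) :
    ∫ J : ι → ℕ, (J i : ℝ) ∂poissonPi r = r i :=
  (integral_comp_eval Measurable.of_discrete.aestronglyMeasurable).trans
    (integral_natCast_poissonMeasure (r i))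

lemma integrable_sum_poissonPi (r : ι → ℝ≥0) :
    Integrable (fun J : ι → ℕ ↦ ∑ i, (J i : ℝ)) (poissonPi r) :=
  integrable_finsetSum _ fun i _ ↦ integrable_eval_poissonPi r i

lemma integral_sum_poissonPi (r : ι → ℝ≥0) :
    ∫ J : ι → ℕ, ∑ i, (J i : ℝ) ∂poissonPi r = ∑ i, (r i : ℝ) := by
  simp only [integral_finsetSum _ fun i _ ↦ integrable_eval_poissonPi r i, integral_eval_poissonPi]

end PoissonPi

lemma nnreal_dist_eq_tsub_add_tsub (r s : ℝ≥0) :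
    dist r s = ((r - s : ℝ≥0) : ℝ) + ((s - r : ℝ≥0) : ℝ) := by
  rcases le_total r s with h | h
  · simp [NNReal.dist_eq, NNReal.coe_sub h, tsub_eq_zero_of_le h, abs_of_nonpos, h]
  · simp [NNReal.dist_eq, NNReal.coe_sub h, tsub_eq_zero_of_le h, abs_of_nonneg, h]

/-- `f` is Lipschitz with constant `L` for the `ℓ¹` distance on `ι → α`. The metric Mathlib puts on
a product is the sup distance, hence the explicit sum. -/
def L1LipschitzWith {ι α β : Type*} [Fintype ι] [Dist α] [Dist β] (L : ℝ)
    (f : (ι → α) → β) : Prop :=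
  ∀ x y, dist (f x) (f y) ≤ L * ∑ i, dist (x i) (y i)

namespace L1LipschitzWith

variable {ι E : Type*} [Fintype ι] [NormedAddCommGroup E] {L : ℝ} {g : (ι → ℕ) → E}

lemma integrable_poissonPi (hg : L1LipschitzWith L g) (r : ι → ℝ≥0) :
    Integrable g (poissonPi r) := by
  have hbound : Integrable (fun J : ι → ℕ ↦ ‖g 0‖ + L * ∑ i, (J i : ℝ)) (poissonPi r) :=
    (integrable_const _).add ((integrable_sum_poissonPi r).const_mul L)
  refine hbound.mono' .of_discrete (.of_forall fun J ↦ ?_)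
  calc
    ‖g J‖ ≤ ‖g 0‖ + ‖g J - g 0‖ := norm_le_norm_add_norm_sub' _ _
    _ ≤ ‖g 0‖ + L * ∑ i, (J i : ℝ) := by
      gcongr
      simpa [dist_eq_norm, Nat.dist_eq] using hg J 0

variable [NormedSpace ℝ E]

lemma dist_integral_poissonPi_add_le (hg : L1LipschitzWith L g) (r s : ι → ℝ≥0) :
    dist (∫ J, g J ∂poissonPi (r + s)) (∫ J, g J ∂poissonPi r) ≤ L * ∑ i, (s i : ℝ) := by
  rw [← integral_sum_poissonPi, ← integral_const_mul, ← poissonPi_conv_poissonPi]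
  refine dist_integral_conv_le ?_ (hg.integrable_poissonPi r)
    ((integrable_sum_poissonPi s).const_mul L) fun J D ↦ ?_
  · rw [poissonPi_conv_poissonPi]
    exact hg.integrable_poissonPi (r + s)
  · simpa [Nat.dist_eq] using hg (J + D) J

lemma integral_poissonPi (hg : L1LipschitzWith L g) :
    L1LipschitzWith L fun r : ι → ℝ≥0 ↦ ∫ J, g J ∂poissonPi r := by
  intro r s
  have hr : r ⊓ s + (r - s) = r := funext fun i ↦ by
    rw [add_comm]; exact tsub_add_min
  have hs : r ⊓ s + (s - r) = s := funext fun i ↦ by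
    rw [add_comm, inf_comm]; exact tsub_add_min
  have hrmin := hg.dist_integral_poissonPi_add_le (r ⊓ s) (r - s)
  have hsmin := hg.dist_integral_poissonPi_add_le (r ⊓ s) (s - r)
  rw [hr] at hrmin
  rw [hs] at hsmin
  simp only [nnreal_dist_eq_tsub_add_tsub, Finset.sum_add_distrib, mul_add]
  exact (dist_triangle_right _ _ _).trans (add_le_add hrmin hsmin)

end L1LipschitzWith

namespace potts

variable {q N : ℕ}

lemma abs_H_sub_H_le (σ : Fin N → Fin q) (J K : Fin N → Fin N → ℝ) :
    |H q N σ J - H q N σ K| ≤ ∑ i, ∑ j, |J i j - K i j| := by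
  simp only [H, ← Finset.sum_sub_distrib, ← sub_mul]
  refine (Finset.abs_sum_le_sum_abs _ _).trans (Finset.sum_le_sum fun i _ ↦ ?_)
  refine (Finset.abs_sum_le_sum_abs _ _).trans (Finset.sum_le_sum fun j _ ↦ ?_)
  split_ifs <;> simp

lemma abs_log_Z_sub_log_Z_le [NeZero q] (J K : Fin N → Fin N → ℝ) :
    |Real.log (Z q N J) - Real.log (Z q N K)| ≤ ∑ i, ∑ j, |J i j - K i j| :=
  abs_log_sum_exp_sub_log_sum_exp_le fun σ ↦ by
    rw [neg_sub_neg, abs_sub_comm]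
    exact abs_H_sub_H_le σ J K

/-- The pressure `(1/N) ln Z_N(βJ)` of a fixed realization `J` of the disorder, as a function on
families indexed by pairs of sites. -/
noncomputable def samplePressure (q N : ℕ) (β : ℝ) (J : Fin N × Fin N → ℕ) : ℝ :=
  1 / N * Real.log (Z q N fun i j ↦ β * (J (i, j) : ℝ))

lemma l1LipschitzWith_samplePressure [NeZero q] (β : ℝ) :
    L1LipschitzWith (|β| / N) (samplePressure q N β) := by
  intro J K
  calc
    dist (samplePressure q N β J) (samplePressure q N β K)
      = 1 / N * |Real.log (Z q N fun i j ↦ β * (J (i, j) : ℝ)) -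
          Real.log (Z q N fun i j ↦ β * (K (i, j) : ℝ))| := by
        rw [Real.dist_eq, samplePressure, samplePressure, ← mul_sub, abs_mul,
          abs_of_nonneg (by positivity : (0 : ℝ) ≤ 1 / N)]
    _ ≤ 1 / N * ∑ i, ∑ j, |β * (J (i, j) : ℝ) - β * (K (i, j) : ℝ)| := by
        gcongr
        exact abs_log_Z_sub_log_Z_le _ _
    _ = |β| / N * ∑ p, dist (J p) (K p) := by
        simp only [← mul_sub, abs_mul, ← Finset.mul_sum, Fintype.sum_prod_type, Nat.dist_eq]
        ring

/-- The Poisson means `c_{ij} / (2N)` of the couplings, indexed by pairs of sites. -/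
noncomputable def couplingMean (c : Fin N → Fin N → ℝ≥0) (p : Fin N × Fin N) : ℝ≥0 :=
  c p.1 p.2 / (2 * N)

lemma E_eq_integral_poissonPi (c : Fin N → Fin N → ℝ≥0) {g : (Fin N → Fin N → ℕ) → ℝ}
    (hg : Integrable (fun J ↦ g (Function.curry J)) (poissonPi (couplingMean c))) :
    E N (fun i j ↦ c i j) g = ∫ J, g (Function.curry J) ∂poissonPi (couplingMean c) := by
  rw [integral_countable hg, E, ← (Equiv.curry (Fin N) (Fin N) ℕ).tsum_eq]
  simp [poissonPi_real_singleton, couplingMean, Fintype.prod_prod_type, Function.curry]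

lemma pmat_eq_integral_samplePressure [NeZero q] (β : ℝ) (c : Fin N → Fin N → ℝ≥0) :
    pmat q N β (fun i j ↦ c i j) = ∫ J, samplePressure q N β J ∂poissonPi (couplingMean c) :=
  E_eq_integral_poissonPi c ((l1LipschitzWith_samplePressure β).integrable_poissonPi _)

lemma sum_dist_couplingMean (c₁ c₂ : Fin N → Fin N → ℝ≥0) :
    ∑ p, dist (couplingMean c₂ p) (couplingMean c₁ p) =
      (∑ i, ∑ j, |(c₂ i j : ℝ) - c₁ i j|) / (2 * N) := by
  simp [Fintype.sum_prod_type, couplingMean, NNReal.dist_eq, ← sub_div, abs_div, Finset.sum_div]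

theorem abs_pmat_sub_pmat_le [NeZero q] (β : ℝ) {c₁ c₂ : Fin N → Fin N → ℝ}
    (h₁ : ∀ i j, 0 ≤ c₁ i j) (h₂ : ∀ i j, 0 ≤ c₂ i j) :
    |pmat q N β c₂ - pmat q N β c₁| ≤ |β| / (2 * (N : ℝ) ^ 2) * ∑ i, ∑ j, |c₂ i j - c₁ i j| := by
  lift c₁ to Fin N → Fin N → ℝ≥0 using h₁
  lift c₂ to Fin N → Fin N → ℝ≥0 using h₂
  calc
    |pmat q N β (fun i j ↦ c₂ i j) - pmat q N β (fun i j ↦ c₁ i j)|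
      ≤ |β| / N * ∑ p, dist (couplingMean c₂ p) (couplingMean c₁ p) := by
        rw [pmat_eq_integral_samplePressure, pmat_eq_integral_samplePressure, ← Real.dist_eq]
        exact (l1LipschitzWith_samplePressure β).integral_poissonPi _ _
    _ = |β| / (2 * (N : ℝ) ^ 2) * ∑ i, ∑ j, |(c₂ i j : ℝ) - c₁ i j| := by
        rw [sum_dist_couplingMean]
        ring

theorem abs_p_sub_p_le [NeZero q] [NeZero N] (β : ℝ) {a b : ℝ} (ha : 0 ≤ a) (hb : 0 ≤ b) :
    |p q N β b - p q N β a| ≤ |β| / 2 * |b - a| := by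
  have hN : (N : ℝ) ≠ 0 := NeZero.ne _
  calc
    |p q N β b - p q N β a|
      ≤ |β| / (2 * (N : ℝ) ^ 2) * ∑ _i : Fin N, ∑ _j : Fin N, |b - a| :=
        abs_pmat_sub_pmat_le β (fun _ _ ↦ ha) fun _ _ ↦ hb
    _ = |β| / 2 * |b - a| := by
        simp only [Finset.sum_const, Finset.card_univ, Fintype.card_fin, nsmul_eq_mul]
        field_simp

end potts

theorem statement5_general (q N : ℕ) (hq : q ≠ 0) (hN : N ≠ 0) (β : ℝ)
    (c₁ c₂ : Fin N → Fin N → ℝ)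
    (h₁ : ∀ i j, 0 ≤ c₁ i j) (h₂ : ∀ i j, 0 ≤ c₂ i j) :
    |potts.pmat q N β c₂ - potts.pmat q N β c₁| ≤
        (|β| / (2 * (N : ℝ) ^ 2)) * ∑ i, ∑ j, |c₂ i j - c₁ i j| ∧
    ∀ a b : ℝ, 0 ≤ a → 0 ≤ b →
      |potts.p q N β b - potts.p q N β a| ≤ (|β| / 2) * |b - a| := by
  have : NeZero q := ⟨hq⟩
  have : NeZero N := ⟨hN⟩
  exact ⟨potts.abs_pmat_sub_pmat_le β h₁ h₂, fun _ _ ↦ potts.abs_p_sub_p_le β⟩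

/-- Lipschitz bound for the quenched pressure in the connectivity
matrix, and the constant-matrix special case. -/
theorem statement5 (q N : ℕ) (hq : 2 ≤ q) (hN : 0 < N) (β : ℝ) (hβ : 0 ≤ β)
    (c₁ c₂ : Fin N → Fin N → ℝ)
    (h₁ : ∀ i j, 0 ≤ c₁ i j) (h₂ : ∀ i j, 0 ≤ c₂ i j) :
    |potts.pmat q N β c₂ - potts.pmat q N β c₁| ≤
        (β / (2 * (N : ℝ) ^ 2)) * ∑ i, ∑ j, |c₂ i j - c₁ i j| ∧
    ∀ a b : ℝ, 0 ≤ a → 0 ≤ b →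
      |potts.p q N β b - potts.p q N β a| ≤ (β / 2) * |b - a| := by
  have h := statement5_general q N (by lia) hN.ne' β c₁ c₂ h₁ h₂
  rwa [abs_of_nonneg hβ] at h
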